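/- arXiv:1105.2685 — 2 statements merged into one kernel-verified Lean document; each statement's English description precedes it below -/
import Mathlib

section
/- Let n ≥ 3 be an integer and let U and V be real vector spaces. A mapping Q : U → V satisfies equation (E_n) if and only if Q is quadratic, i.e. Q(x+y) + Q(x−y) = 2Q(x) + 2Q(y) for all x, y ∈ U. -/
/-- Equation (E_n): `n·∑_{1≤i<j≤n} Q(x_i − x_j) = ∑_{i=1}^{n} Q((∑_{j=1}^{n} x_j) − n·x_i)`. -/
def SatisfiesEn {U V : Type*} [AddCommGroup U] [AddCommGroup V] (n : ℕ) (Q : U → V) : Prop :=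
  ∀ x : Fin n → U,
    n • ∑ p ∈ Finset.univ.filter (fun p : Fin n × Fin n => p.1 < p.2), Q (x p.1 - x p.2)
      = ∑ i : Fin n, Q ((∑ j : Fin n, x j) - n • x i)

theorem lattice_aux {V : Type*} [AddCommGroup V] [Module ℝ V] (q : ℤ → ℤ → V)
    (z : q 0 0 = 0) (ev : ∀ i j, q (-i) (-j) = q i j)
    (T : ∀ i j, q (2 * i) (2 * j) = (4 : ℝ) • q i j)
    (E : ∀ i j k l, q (2 * i + k) (2 * j + l) + q (i + 2 * k) (j + 2 * l) + q (i - k) (j - l)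
      = (3 : ℝ) • (q i j + q k l + q (i + k) (j + l))) :
    q 1 1 + q 1 (-1) = (2 : ℝ) • q 1 0 + (2 : ℝ) • q 0 1 := by
  have ev1 : ∀ i j, i < 0 → q i j = q (-i) (-j) := fun i j _ => (ev i j).symm
  have ev2 : ∀ j, j < 0 → q 0 j = q 0 (-j) := fun j _ => by simpa using (ev 0 j).symm
  have h0 := E (-2) (-1) (0) (1)
  have h1 := E (-2) (0) (-2) (1)
  have h2 := E (-2) (-2) (-2) (2)
  have h3 := E (-2) (-1) (-2) (0)
  have h4 := E (-2) (-1) (-2) (1)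
  have h5 := E (-2) (0) (2) (0)
  have h6 := E (-1) (1) (1) (-1)
  have h7 := E (-2) (0) (0) (1)
  have h8 := E (-1) (0) (0) (1)
  have h9 := T (1) (1)
  have h10 := E (-2) (1) (1) (-1)
  have h11 := E (-2) (-1) (1) (0)
  have h12 := E (-2) (0) (1) (-2)
  have h13 := E (-2) (0) (1) (-1)
  have h14 := T (1) (0)
  have h15 := E (-2) (-1) (2) (1)
  have h16 := E (-2) (-2) (0) (2)
  have h17 := T (1) (2)
  have h18 := T (0) (1)
  norm_num [ev1, ev2, z, -smul_add] at h0 h1 h2 h3 h4 h5 h6 h7 h8 h9 h10 h11 h12 h13 h14 h15 h16 h17 h18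
  linear_combination (norm := module) (1/6 : ℝ) • h0 + (1/18 : ℝ) • h1 + (-1/18 : ℝ) • h2 + (1/18 : ℝ) • h3 + (-1/18 : ℝ) • h4 + (-1/3 : ℝ) • h5 + (-3/8 : ℝ) • h6 + (1/6 : ℝ) • h7 + (1/6 : ℝ) • h8 + (-5/24 : ℝ) • h9 + (-1/18 : ℝ) • h10 + (-1/18 : ℝ) • h11 + (1/18 : ℝ) • h12 + (1/18 : ℝ) • h13 + (11/24 : ℝ) • h14 + (-1/24 : ℝ) • h15 + (1/24 : ℝ) • h16 + (-1/24 : ℝ) • h17 + (1/8 : ℝ) • h18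

theorem pairs_eq {V : Type*} [AddCommGroup V] (n : ℕ) (f : Fin n → Fin n → V) :
    ∑ p ∈ Finset.univ.filter (fun p : Fin n × Fin n => p.1 < p.2), f p.1 p.2
      = ∑ i, ∑ j, if i < j then f i j else 0 := by
  rw [Finset.sum_filter, Fintype.sum_prod_type]

theorem Q_zero {U V : Type*} [AddCommGroup U] [AddCommGroup V] [Module ℝ V]
    (n : ℕ) (hn : 3 ≤ n) (Q : U → V) (h : SatisfiesEn n Q) : Q 0 = 0 := by
  have h0 := h 0
  simp only [Pi.zero_apply, sub_self, Finset.sum_const, smul_zero, Finset.card_univ,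
    Fintype.card_fin] at h0
  set c := (Finset.univ.filter (fun p : Fin n × Fin n => p.1 < p.2)).card with hc
  have h1 : 1 < c := by
    rw [hc, Finset.one_lt_card]
    refine ⟨(⟨0, by omega⟩, ⟨1, by omega⟩), by simp, (⟨0, by omega⟩, ⟨2, by omega⟩), by simp, by simp⟩
  have h2 : ((n : ℝ) * ((c : ℝ) - 1)) • Q 0 = 0 := by
    have : (n : ℝ) • (c : ℝ) • Q 0 = (n : ℝ) • Q 0 := by
      simpa only [Nat.cast_smul_eq_nsmul] using h0
    linear_combination (norm := module) this
  rcases smul_eq_zero.mp h2 with h3 | h3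
  · exfalso
    have : (1 : ℝ) < c := by exact_mod_cast h1
    have : (3 : ℝ) ≤ n := by exact_mod_cast hn
    rcases mul_eq_zero.mp h3 with h4 | h4 <;> linarith
  · exact h3

theorem sum_reindex_aux {U V : Type*} [AddCommGroup U] [AddCommGroup V] [Module ℝ V]
    (n : ℕ) (hn : 3 ≤ n) (Q : U → V) (h : SatisfiesEn n Q) (x : Fin n → U) :
    ∑ i, ∑ j, (if i < j then Q (x i - x j) else 0)
      = ∑ i, ∑ j, (if i < j then Q (x j - x i) else 0) := by
  have h1 := h x
  have h2 := h (x ∘ Fin.rev)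
  have e1 : ∑ j, (x ∘ Fin.rev) j = ∑ j, x j := Equiv.sum_comp Fin.revPerm x
  have e2 : ∑ i, Q ((∑ j, x j) - n • (x ∘ Fin.rev) i) = ∑ i, Q ((∑ j, x j) - n • x i) :=
    Equiv.sum_comp Fin.revPerm (fun i => Q ((∑ j, x j) - n • x i))
  rw [e1, e2, ← h1, pairs_eq n (fun i j => Q ((x ∘ Fin.rev) i - (x ∘ Fin.rev) j)),
    pairs_eq n (fun i j => Q (x i - x j))] at h2
  have hn0 : (n : ℝ) ≠ 0 := by positivity
  simp only [← Nat.cast_smul_eq_nsmul ℝ] at h2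
  have h3 := smul_right_injective V hn0 h2
  rw [← h3, Finset.sum_comm]
  rw [← Equiv.sum_comp Fin.revPerm]
  refine Finset.sum_congr rfl fun i _ => ?_
  rw [← Equiv.sum_comp Fin.revPerm]
  refine Finset.sum_congr rfl fun j _ => ?_
  simp

theorem Q_even {U V : Type*} [AddCommGroup U] [AddCommGroup V] [Module ℝ V]
    (n : ℕ) (hn : 3 ≤ n) (Q : U → V) (h : SatisfiesEn n Q) (a : U) : Q (-a) = Q a := by
  have h0 := Q_zero n hn Q h
  obtain ⟨k, rfl⟩ : ∃ k, n = k + 1 := ⟨n - 1, by omega⟩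
  have h1 := sum_reindex_aux _ hn Q h (Fin.cons a (fun _ => 0))
  simp [Fin.sum_univ_succ, h0, ← Nat.cast_smul_eq_nsmul ℝ] at h1
  have hk : (k : ℝ) ≠ 0 := by
    have : k ≠ 0 := by omega
    exact_mod_cast this
  exact (smul_right_injective V hk h1).symm

theorem case_three {U V : Type*} [AddCommGroup U] [AddCommGroup V] [Module ℝ V]
    (Q : U → V) (h : SatisfiesEn 3 Q) (x y : U) :
    Q (x + y) + Q (x - y) = (2 : ℝ) • Q x + (2 : ℝ) • Q y := by
  have h0 := Q_zero 3 le_rfl Q h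
  have he := Q_even 3 le_rfl Q h
  have hE : ∀ a b : U, Q (a + a + b) + Q (a + b + b) + Q (a - b)
      = (3 : ℝ) • (Q a + Q b + Q (a + b)) := by
    intro a b
    have h1 := h ![a, 0, -b]
    rw [pairs_eq 3 (fun i j => Q (![a, 0, -b] i - ![a, 0, -b] j))] at h1
    simp [Fin.sum_univ_three] at h1
    rw [show a + -b - 3 • a = -(a + a + b) by abel, show a + -b + 3 • b = a + b + b by abel,
      show a + -b = a - b by abel, he, ← Nat.cast_smul_eq_nsmul ℝ] at h1
    push_cast at h1
    linear_combination (norm := module) -h1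
  have hT : ∀ a : U, Q (a + a) = (4 : ℝ) • Q a := by
    intro a
    have := hE a 0
    simp [h0] at this
    linear_combination (norm := module) this
  have := lattice_aux (fun i j => Q (i • x + j • y)) (by simp [h0])
    (fun i j => by rw [← he]; congr 1; module)
    (fun i j => by rw [← hT]; congr 1; module)
    (fun i j k l => by
      rw [show (i + k) • x + (j + l) • y = (i • x + j • y) + (k • x + l • y) by module, ← hE]
      congr 1
      · congr 1
        · congr 1; module
        · congr 1; module
      · congr 1; module)
  simpa [sub_eq_add_neg] using this

theorem pairs_cons {U V : Type*} [AddCommGroup U] [AddCommGroup V] (m : ℕ) (Q : U → V)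
    (a : U) (w : Fin m → U) :
    ∑ i, ∑ j, (if i < j then Q ((Fin.cons a w : Fin (m + 1) → U) i
        - (Fin.cons a w : Fin (m + 1) → U) j) else 0)
      = ∑ j, Q (a - w j) + ∑ i, ∑ j, (if i < j then Q (w i - w j) else 0) := by
  simp [Fin.sum_univ_succ]

theorem case_four {U V : Type*} [AddCommGroup U] [AddCommGroup V] [Module ℝ V] (k : ℕ)
    (Q : U → V) (h : SatisfiesEn (k + 4) Q) (x y : U) :
    Q (x + y) + Q (x - y) = (2 : ℝ) • Q x + (2 : ℝ) • Q y := by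
  have h0 := Q_zero _ (by omega) Q h
  have he := Q_even _ (by omega) Q h
  have key : ∀ a b : U, ((k : ℝ) + 4) • (Q (a + a) + Q (b + b) + (2 : ℝ) • Q (a + b)
      + (2 : ℝ) • Q (a - b) + (2 * (k : ℝ)) • (Q a + Q b))
      = (2 : ℝ) • Q ((k + 4) • a) + (2 : ℝ) • Q ((k + 4) • b) := by
    intro a b
    let v : Fin (k + 4) → U := Fin.cons a (Fin.cons (-a) (Fin.cons b (Fin.cons (-b) (fun _ => 0))))
    have hs : ∑ j, v j = 0 := by simp [v, Fin.sum_univ_succ]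
    have h1 := h v
    rw [hs, pairs_eq _ (fun i j => Q (v i - v j))] at h1
    simp only [v, pairs_cons] at h1
    simp [Fin.sum_univ_succ, h0, he, ← Nat.cast_smul_eq_nsmul ℝ, -smul_add] at h1
    rw [show -a - b = -(a + b) by abel, show -a + b = -(a - b) by abel, he, he] at h1
    linear_combination (norm := module) h1
  have k1 := key x y
  have k2 := key x 0
  have k3 := key y 0
  simp only [add_zero, smul_zero, sub_zero, h0] at k2 k3
  have k4 : (2 * ((k : ℝ) + 4)) • (Q (x + y) + Q (x - y))
      = (2 * ((k : ℝ) + 4)) • ((2 : ℝ) • Q x + (2 : ℝ) • Q y) := by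
    linear_combination (norm := module) k1 - k2 - k3
  have hk : (2 * ((k : ℝ) + 4)) ≠ 0 := by positivity
  exact smul_right_injective V hk k4

theorem quad_imp {U V : Type*} [AddCommGroup U] [AddCommGroup V] [Module ℝ V] (n : ℕ)
    (Q : U → V) (h : ∀ x y : U, Q (x + y) + Q (x - y) = (2 : ℝ) • Q x + (2 : ℝ) • Q y) :
    SatisfiesEn n Q := by
  have h0 : Q 0 = 0 := by
    have := h 0 0
    simp at this
    have h2 : (2 : ℝ) • Q 0 = 0 := by linear_combination (norm := module) -this
    simpa using h2
  have he : ∀ a, Q (-a) = Q a := by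
    intro a
    have := h 0 a
    simp [h0] at this
    linear_combination (norm := module) this
  have hc : ∀ x y z, Q (x + y + z) + Q x + Q y + Q z = Q (x + y) + Q (x + z) + Q (y + z) := by
    intro x y z
    have a1 := h (x + y) z
    have a2 := h x (y - z)
    have a3 := h (x + z) y
    have a4 := h y z
    rw [show x + (y - z) = x + y - z by abel, show x - (y - z) = x + z - y by abel] at a2
    rw [show x + z + y = x + y + z by abel] at a3
    linear_combination (norm := module) (1/2 : ℝ) • a1 + (1/2 : ℝ) • a3 - (1/2 : ℝ) • a2 - a4
  let B : U →+ U →+ V := AddMonoidHom.mk' (fun x => AddMonoidHom.mk' (fun y => Q (x + y) - Q x - Q y)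
    (fun y z => by
      have := hc x y z
      rw [← add_assoc]
      linear_combination (norm := module) this))
    (fun x y => by
      ext z
      have := hc x y z
      simp only [AddMonoidHom.mk'_apply, AddMonoidHom.add_apply]
      linear_combination (norm := module) this)
  have hB : ∀ x y, B x y = Q (x + y) - Q x - Q y := fun x y => rfl
  have hsymm : ∀ x y, B x y = B y x := by
    intro x y
    rw [hB, hB, add_comm y x]
    abel
  have hQ : ∀ x, Q x = (1/2 : ℝ) • B x x := by
    intro x
    have := h x x
    rw [sub_self, h0] at this
    rw [hB]
    linear_combination (norm := module) -(1/2 : ℝ) • this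
  have hd : ∀ x y, Q (x - y) = Q x + Q y - B x y := by
    intro x y
    rw [hB]
    linear_combination (norm := module) h x y
  intro x
  set s := ∑ j, x j with hs
  rw [pairs_eq n (fun i j => Q (x i - x j))]
  set L := ∑ i, ∑ j, (if i < j then Q (x i - x j) else 0) with hL
  have e1 : L + L = ∑ i, ∑ j, Q (x i - x j) := by
    have : L = ∑ i, ∑ j, (if j < i then Q (x i - x j) else 0) := by
      rw [hL, Finset.sum_comm]
      refine Finset.sum_congr rfl fun i _ => Finset.sum_congr rfl fun j _ => ?_
      rw [← he, neg_sub]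
    nth_rewrite 2 [this]
    rw [hL, ← Finset.sum_add_distrib]
    refine Finset.sum_congr rfl fun i _ => ?_
    rw [← Finset.sum_add_distrib]
    refine Finset.sum_congr rfl fun j _ => ?_
    rcases lt_trichotomy i j with hij | hij | hij
    · simp [hij, hij.not_gt]
    · simp [hij, h0]
    · simp [hij, hij.not_gt]
  have hBs : ∑ i, ∑ j, B (x i) (x j) = (2 : ℝ) • Q s := by
    rw [hQ s, hs]
    simp only [map_sum, AddMonoidHom.finsetSum_apply]
    rw [Finset.sum_comm]
    module
  have e2 : L + L = (2 * (n : ℝ)) • ∑ i, Q (x i) - (2 : ℝ) • Q s := by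
    rw [e1, ← hBs]
    simp only [hd, Finset.sum_sub_distrib, Finset.sum_add_distrib, Finset.sum_const,
      Finset.card_univ, Fintype.card_fin, ← Finset.smul_sum, ← Nat.cast_smul_eq_nsmul ℝ]
    module
  have hBn : ∀ i, Q (s - n • x i) = Q s + ((n : ℝ) * n) • Q (x i) - (n : ℝ) • B s (x i) := by
    intro i
    rw [hd, hQ (n • x i), hQ (x i)]
    have hl : ∀ u w, B (n • u) w = n • B u w := fun u w => by rw [map_nsmul]; rfl
    rw [map_nsmul (B s), hl, map_nsmul (B (x i))]
    simp only [← Nat.cast_smul_eq_nsmul ℝ]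
    module
  have hBss : ∑ i, B s (x i) = (2 : ℝ) • Q s := by
    rw [← map_sum, ← hs, hQ s]; module
  simp only [hBn, Finset.sum_sub_distrib, Finset.sum_add_distrib, Finset.sum_const,
      Finset.card_univ, Fintype.card_fin, ← Finset.smul_sum, ← Nat.cast_smul_eq_nsmul ℝ, hBss]
  linear_combination (norm := module) ((n : ℝ) / 2) • e2



/-- For an integer `n ≥ 3`, a mapping `Q` between real vector spaces
satisfies equation (E_n) iff `Q` is quadratic. -/
theorem stmt_3 {U V : Type*} [AddCommGroup U] [Module ℝ U] [AddCommGroup V] [Module ℝ V]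
    (n : ℕ) (hn : 3 ≤ n) (Q : U → V) :
    SatisfiesEn n Q ↔
      (∀ x y : U, Q (x + y) + Q (x - y) = (2 : ℕ) • Q x + (2 : ℕ) • Q y) := by
  have e : ∀ v : V, (2 : ℕ) • v = (2 : ℝ) • v := fun v => by
    rw [← Nat.cast_smul_eq_nsmul ℝ]; norm_num
  simp only [e]
  constructor
  · intro h
    rcases Nat.lt_or_ge n 4 with h4 | h4
    · obtain rfl : n = 3 := by omega
      exact case_three Q h
    · obtain ⟨k, rfl⟩ : ∃ k, n = k + 4 := ⟨n - 4, by omega⟩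
      exact case_four k Q h
  · exact quad_imp n Q
end

section
/- Let U be a real normed linear space and let n ≥ 3 be a fixed integer. Then the norm of U arises from an inner product (i.e. there exists an inner product ⟨·,·⟩ on U with ⟨x,x⟩ = ‖x‖² for all x ∈ U) if and only if n·∑_{1≤i<j≤n} ‖x_i − x_j‖² = ∑_{i=1}^{n} ‖(∑_{j=1}^{n} x_j) − n·x_i‖² for all x_1, …, x_n ∈ U. -/
lemma pair_sum (n : ℕ) (F : Fin n → Fin n → ℝ) (hs : ∀ i j, F i j = F j i)
    (h0 : ∀ i, F i i = 0) :
    ∑ i, ∑ j, F i j =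
      2 * ∑ p ∈ Finset.univ.filter (fun p : Fin n × Fin n => p.1 < p.2), F p.1 p.2 := by
  rw [Finset.sum_filter, Fintype.sum_prod_type]
  have h1 : ∑ i, ∑ j, F i j =
      ∑ i, ∑ j, (if i < j then F i j else 0) + ∑ i, ∑ j, (if j < i then F j i else 0) := by
    rw [← Finset.sum_add_distrib]
    refine Finset.sum_congr rfl fun i _ => ?_
    rw [← Finset.sum_add_distrib]
    refine Finset.sum_congr rfl fun j _ => ?_
    rcases lt_trichotomy i j with h | h | h
    · simp [h, h.not_gt]
    · subst h; simp [h0]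
    · simp [h, h.not_gt, hs i j]
  rw [h1, Finset.sum_comm (f := fun i j => if j < i then F j i else 0)]
  ring

lemma tri {U : Type*} [NormedAddCommGroup U] [NormedSpace ℝ U] (n : ℕ) (hn : 3 ≤ n)
    (H : ∀ x : Fin n → U,
      (n : ℝ) * ∑ p ∈ Finset.univ.filter (fun p : Fin n × Fin n => p.1 < p.2),
          ‖x p.1 - x p.2‖ ^ 2
        = ∑ i : Fin n, ‖(∑ j : Fin n, x j) - n • x i‖ ^ 2) (a b : U) :
    ‖a - b‖ ^ 2 + ‖(2:ℝ) • a + b‖ ^ 2 + ‖a + (2:ℝ) • b‖ ^ 2 =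
      3 * (‖a‖ ^ 2 + ‖b‖ ^ 2 + ‖a + b‖ ^ 2) := by
  obtain ⟨m, rfl⟩ : ∃ m, n = m + 3 := ⟨n - 3, by omega⟩
  set x : Fin (m + 3) → U := Fin.cons a (Fin.cons b (Fin.cons (-(a + b)) (fun _ => 0))) with hx
  have h := H x
  have hp := pair_sum (m + 3) (fun i j => ‖x i - x j‖ ^ 2)
    (fun i j => by simp only [norm_sub_rev]) (fun i => by simp)
  have hS : ∑ j, x j = 0 := by
    simp [hx, Fin.sum_univ_succ]
  have hR : ∀ i, ‖(∑ j, x j) - (m + 3) • x i‖ ^ 2 = ((m + 3 : ℕ) : ℝ) ^ 2 * ‖x i‖ ^ 2 := by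
    intro i
    rw [hS, zero_sub, norm_neg, ← Nat.cast_smul_eq_nsmul ℝ, norm_smul, mul_pow]
    simp only [Real.norm_natCast]
  simp only [hR, ← Finset.mul_sum] at h
  have hS2 : ∑ i, ‖x i‖ ^ 2 = ‖a‖ ^ 2 + ‖b‖ ^ 2 + ‖a + b‖ ^ 2 := by
    simp only [hx, Fin.sum_univ_succ, Fin.cons_zero, Fin.cons_succ, norm_neg]
    simp
    ring
  have e1 : a - -(a + b) = (2:ℝ) • a + b := by module
  have e2 : b - -(a + b) = a + (2:ℝ) • b := by module
  have e3 : -(a + b) - a = -((2:ℝ) • a + b) := by module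
  have e4 : -(a + b) - b = -(a + (2:ℝ) • b) := by module
  have hD : ∑ i, ∑ j, ‖x i - x j‖ ^ 2 =
      2 * (‖a - b‖ ^ 2 + ‖(2:ℝ) • a + b‖ ^ 2 + ‖a + (2:ℝ) • b‖ ^ 2)
       + 2 * m * (‖a‖ ^ 2 + ‖b‖ ^ 2 + ‖a + b‖ ^ 2) := by
    simp only [hx, Fin.sum_univ_succ, Fin.cons_zero, Fin.cons_succ, e1, e2, e3, e4, norm_neg,
      sub_self, sub_zero, zero_sub, norm_zero, norm_sub_rev b a, Finset.sum_const,
      Finset.card_univ, Fintype.card_fin, nsmul_eq_mul]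
    ring
  rw [hS2] at h
  rw [hD] at hp
  have hm : ((m + 3 : ℕ) : ℝ) ≠ 0 := by positivity
  have h' := mul_left_cancel₀ hm (h.trans (by ring_nf :
    _ = ((m + 3 : ℕ) : ℝ) * (((m + 3 : ℕ) : ℝ) * (‖a‖ ^ 2 + ‖b‖ ^ 2 + ‖a + b‖ ^ 2))))
  rw [h'] at hp
  push_cast at hp
  linarith

lemma par_of_tri {U : Type*} [NormedAddCommGroup U] [NormedSpace ℝ U]
    (T : ∀ a b : U, ‖a - b‖ ^ 2 + ‖(2:ℝ) • a + b‖ ^ 2 + ‖a + (2:ℝ) • b‖ ^ 2 =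
      3 * (‖a‖ ^ 2 + ‖b‖ ^ 2 + ‖a + b‖ ^ 2)) (a b : U) :
    ‖a + b‖ ^ 2 + ‖a - b‖ ^ 2 - 2 * ‖a‖ ^ 2 - 2 * ‖b‖ ^ 2 = 0 := by
  obtain ⟨D, hD⟩ : ∃ D : U → U → ℝ, ∀ a b, D a b =
    ‖a + b‖ ^ 2 + ‖a - b‖ ^ 2 - 2 * ‖a‖ ^ 2 - 2 * ‖b‖ ^ 2 := ⟨_, fun _ _ => rfl⟩
  have n2 : ∀ v : U, ‖(2:ℝ) • v‖ ^ 2 = 4 * ‖v‖ ^ 2 := by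
    intro v; rw [norm_smul, mul_pow]; norm_num
  have s1 : ∀ a b, D ((2:ℝ) • a) b + D a ((2:ℝ) • b) = 2 * D a b := by
    intro a b
    have t1 := T a b
    have t2 := T a (-b)
    simp only [sub_neg_eq_add, smul_neg, ← sub_eq_add_neg, norm_neg] at t2
    simp only [hD, n2]
    linarith
  have s2 : ∀ a b, D ((2:ℝ) • a) ((2:ℝ) • b) = 4 * D a b := by
    intro a b
    simp only [hD, ← smul_add, ← smul_sub, n2]
    ring
  have s8 : ∀ a b, D a ((8:ℝ) • b) = -8 * D a b := by
    intro a b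
    have h1 := s1 a ((2:ℝ) • b)
    have h2 := s1 a ((2:ℝ) • (2:ℝ) • b)
    rw [s2] at h1 h2
    have e : (8:ℝ) • b = (2:ℝ) • (2:ℝ) • (2:ℝ) • b := by module
    rw [e]
    linarith
  have s64 : ∀ a b, D a ((64:ℝ) • b) = 64 * D a b := by
    intro a b
    have e : (64:ℝ) • b = (8:ℝ) • (8:ℝ) • b := by module
    rw [e, s8, s8]; ring
  have lb : ∀ a b, -2 * ‖b‖ ^ 2 ≤ D a b := by
    intro a b
    rw [hD]
    have h1 : 2 * ‖a‖ ≤ ‖a + b‖ + ‖a - b‖ := by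
      have h := norm_add_le (a + b) (a - b)
      have e : (a + b) + (a - b) = (2:ℝ) • a := by module
      rw [e, norm_smul] at h
      simpa using h
    nlinarith [sq_nonneg (‖a + b‖ - ‖a - b‖), norm_nonneg a, norm_nonneg (a + b),
      norm_nonneg (a - b)]
  have lbm : ∀ (m : ℕ) (a b : U), -2 * ‖b‖ ^ 2 * (1 / 64) ^ m ≤ D a b := by
    intro m
    induction m with
    | zero => intro a b; simpa using lb a b
    | succ k ih =>
      intro a b
      have h := ih a ((1 / 64 : ℝ) • b)
      have e : D a b = 64 * D a ((1 / 64 : ℝ) • b) := by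
        rw [← s64, smul_smul]; norm_num
      rw [norm_smul, mul_pow] at h
      norm_num at h
      rw [e]
      have e2 : -2 * ‖b‖ ^ 2 * (1 / 64 : ℝ) ^ (k + 1) =
          64 * -(2 * (1 / 4096 * ‖b‖ ^ 2) * (1 / 64) ^ k) := by ring
      rw [e2]
      linarith
  have nn : ∀ a b, 0 ≤ D a b := by
    intro a b
    have lim : Filter.Tendsto (fun m : ℕ => -2 * ‖b‖ ^ 2 * (1 / 64 : ℝ) ^ m) Filter.atTop
        (nhds (-2 * ‖b‖ ^ 2 * 0)) :=
      (tendsto_pow_atTop_nhds_zero_of_lt_one (by norm_num) (by norm_num)).const_mul _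
    rw [mul_zero] at lim
    exact le_of_tendsto' lim fun m => lbm m a b
  have h1 := nn a b
  have h2 := nn a ((8:ℝ) • b)
  rw [s8] at h2
  rw [← hD]
  linarith


/-- For a real normed space `U` and a fixed integer `n ≥ 3`:
the norm of `U` arises from an inner product iff
`n·∑_{1≤i<j≤n} ‖x_i − x_j‖² = ∑_{i=1}^{n} ‖(∑_{j=1}^{n} x_j) − n·x_i‖²` for all
`x_1, …, x_n ∈ U`. -/
theorem stmt_6 {U : Type*} [NormedAddCommGroup U] [NormedSpace ℝ U]
    (n : ℕ) (hn : 3 ≤ n) :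
    (∃ inner : U → U → ℝ,
      (∀ x y : U, inner x y = inner y x) ∧
      (∀ x y z : U, inner (x + y) z = inner x z + inner y z) ∧
      (∀ (c : ℝ) (x y : U), inner (c • x) y = c * inner x y) ∧
      (∀ x : U, x ≠ 0 → 0 < inner x x) ∧
      (∀ x : U, inner x x = ‖x‖ ^ 2)) ↔
    (∀ x : Fin n → U,
      (n : ℝ) * ∑ p ∈ Finset.univ.filter (fun p : Fin n × Fin n => p.1 < p.2),
          ‖x p.1 - x p.2‖ ^ 2
        = ∑ i : Fin n, ‖(∑ j : Fin n, x j) - n • x i‖ ^ 2) := by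
  constructor
  · rintro ⟨B, hsymm, hadd, hsmul, -, hn2⟩ x
    have hadd' : ∀ x y z, B x (y + z) = B x y + B x z := fun x y z => by
      rw [hsymm, hadd, hsymm y, hsymm z]
    have hsmul' : ∀ (c : ℝ) x y, B x (c • y) = c * B x y := fun c x y => by
      rw [hsymm, hsmul, hsymm y]
    have hsub : ∀ x y : U, ‖x - y‖ ^ 2 = ‖x‖ ^ 2 + ‖y‖ ^ 2 - 2 * B x y := by
      intro x y
      have e : x - y = x + (-1 : ℝ) • y := by module
      rw [e, ← hn2, ← hn2, ← hn2]
      simp only [hadd, hadd', hsmul, hsmul', hsymm y x]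
      ring
    have hB0 : ∀ y, B 0 y = 0 := fun y => by simpa using hsmul 0 0 y
    have hsum : ∀ y, ∑ i, B (x i) y = B (∑ i, x i) y := by
      intro y
      let φ : U →+ ℝ := { toFun := fun z => B z y, map_zero' := hB0 y, map_add' := fun p q => hadd p q y }
      exact (map_sum φ x Finset.univ).symm
    have hsum' : ∀ y, ∑ i, B y (x i) = B y (∑ i, x i) := by
      intro y
      rw [hsymm y, ← hsum]
      exact Finset.sum_congr rfl fun i _ => hsymm _ _
    have hp := pair_sum n (fun i j => ‖x i - x j‖ ^ 2)
      (fun i j => by simp only [norm_sub_rev]) (fun i => by simp)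
    simp only [hsub (x _) (x _), Finset.sum_add_distrib, Finset.sum_sub_distrib,
      ← Finset.mul_sum, hsum', hsum, Finset.sum_const, Finset.card_univ, Fintype.card_fin,
      nsmul_eq_mul, hn2] at hp
    simp only [hsub, ← Nat.cast_smul_eq_nsmul ℝ, norm_smul, mul_pow, hsmul', Real.norm_natCast,
      Finset.sum_add_distrib, Finset.sum_sub_distrib,
      ← Finset.mul_sum, hsum', hsum, Finset.sum_const, Finset.card_univ, Fintype.card_fin,
      nsmul_eq_mul, hn2]
    linear_combination (-(n : ℝ) / 2) * hp
  · intro H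
    have P := par_of_tri (tri n hn H)
    let I : InnerProductSpace ℝ U := InnerProductSpace.ofNorm ℝ (fun x y => by linarith [P x y])
    refine ⟨fun x y => I.inner x y, fun x y => real_inner_comm _ _,
      fun x y z => inner_add_left _ _ _,
      fun c x y => real_inner_smul_left _ _ _, fun x hx => real_inner_self_pos.2 hx,
      fun x => real_inner_self_eq_norm_sq x⟩
end
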